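/- Let Q₁, Q₂, Q₃ : ℝ³ → ℝ be real quadratic forms and f := Q₁Q₃ − Q₂². Assume that fderiv ℝ f P ≠ 0 for every P ∈ ℝ³∖{0} with f(P) = 0. Let ℝP² be the quotient topological space of ℝ³∖{0} by the scaling action of ℝ∖{0}, and assume: (i) Z := { [P] ∈ ℝP² : f(P) = 0 } has exactly three connected components; (ii) the set { [P] ∈ ℝP² : f(P) ≤ 0 } is not connected; (iii) the set S₂ := { [P] ∈ ℝP² : Q₁(P) ≥ 0 ∨ f(P) ≤ 0 } is connected. Then there exists P ∈ ℝ³∖{0} with f(P) = 0 and Q₁(P) > 0; consequently there exist P ∈ ℝ³∖{0} and r, s ∈ ℝ with r² = Q₁(P), r·s = Q₂(P), s² = Q₃(P), i.e. the discriminant cover Δ̃ has a real point. -/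

import Mathlib

/-- The scaling relation on nonzero vectors of `ℝⁿ`. -/
def projRel (n : ℕ) (v w : {x : Fin n → ℝ // x ≠ 0}) : Prop :=
  ∃ c : ℝ, c ≠ 0 ∧ c • (v : Fin n → ℝ) = (w : Fin n → ℝ)

/-- The real projective space `ℝPⁿ⁻¹`, as the quotient topological space of `ℝⁿ ∖ {0}` by the
scaling action of `ℝ ∖ {0}`. -/
def RP (n : ℕ) : Type := Quot (projRel n)

instance (n : ℕ) : TopologicalSpace (RP n) :=
  inferInstanceAs (TopologicalSpace (Quot (projRel n)))

/-!
Suppose that `f = Q₁Q₃ − Q₂²` has no real zero with `Q₁ > 0`, and let `U = {f > 0, Q₁ > 0}`. At a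
nonzero boundary point `P` of `U` one has `Q₁ = Q₂ = 0`, and smoothness forces `Q₃ > 0`. On the
quadric `Q₁ = 0` we have `f = −Q₂²`, while `f > 0` just inside `Q₁ > 0`; as `f` has no zero with
`Q₁ > 0`, the form `Q₂` must vanish on the quadric near `P`, and therefore `Q₂ = k Q₁`. But then
`f` splits as `Q₁ (Q₃ − k² Q₁)`, and its zero locus is a union of two connected quadrics, so it
has at most two components. Hence `U` has no nonzero boundary point, so it is empty or all of
`ℝⁿ ∖ {0}`. The latter would leave no zero of `f`, and the former would give `S₂ = {f ≤ 0}`.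
-/

open Filter Module QuadraticMap Topology

section HyperbolicPair

variable {R M : Type*} [CommRing R] [AddCommGroup M] [Module R M]

/-- The vectors orthogonal to both `u` and `v` for the polar form of `Q`: when `u`, `v` is a
hyperbolic pair, a complement of the hyperbolic plane that they span. -/
def polarOrthogonal (Q : QuadraticForm R M) (u v : M) : Submodule R M :=
  LinearMap.ker (Q.polarBilin u) ⊓ LinearMap.ker (Q.polarBilin v)

theorem mem_polarOrthogonal {Q : QuadraticForm R M} {u v w : M} :
    w ∈ polarOrthogonal Q u v ↔ polar Q u w = 0 ∧ polar Q v w = 0 :=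
  Iff.rfl

/-- A hyperbolic pair of a quadratic form, normalized by the polar form (twice the usual bilinear
form): coordinates in which `Q (a • u + b • v) = a * b`. -/
structure IsHyperbolicPair (Q : QuadraticForm R M) (u v : M) : Prop where
  isotropic_left : Q u = 0
  isotropic_right : Q v = 0
  polar_eq_one : polar Q u v = 1

theorem quadraticForm_map_smul_add_smul_add (Q : QuadraticForm R M) (a b : R) (u v w : M) :
    Q (a • u + b • v + w) = a ^ 2 * Q u + b ^ 2 * Q v + Q w + a * b * polar Q u v
      + a * polar Q u w + b * polar Q v w := by
  rw [QuadraticMap.map_add Q (a • u + b • v), QuadraticMap.map_add Q (a • u)]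
  simp only [QuadraticMap.map_smul, polar_add_left, polar_smul_left, polar_smul_right, smul_eq_mul]
  ring

namespace IsHyperbolicPair

variable {Q : QuadraticForm R M} {u v : M}

theorem exists_eq_add_add (h : IsHyperbolicPair Q u v) (x : M) :
    ∃ a b : R, ∃ w ∈ polarOrthogonal Q u v, x = a • u + b • v + w := by
  refine ⟨polar Q v x, polar Q u x, x - polar Q v x • u - polar Q u x • v,
    mem_polarOrthogonal.2 ⟨?_, ?_⟩, by abel⟩
  · simp [h.isotropic_left, h.polar_eq_one]
  · simp [h.isotropic_right, polar_comm Q v u, h.polar_eq_one]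

theorem map_add_add (h : IsHyperbolicPair Q u v) {w : M} (hw : w ∈ polarOrthogonal Q u v)
    (a b : R) : Q (a • u + b • v + w) = a * b + Q w := by
  obtain ⟨hu, hv⟩ := mem_polarOrthogonal.1 hw
  rw [quadraticForm_map_smul_add_smul_add, h.isotropic_left, h.isotropic_right, h.polar_eq_one, hu,
    hv]
  ring

theorem polarBilin_eq_zero_of_mem (h : IsHyperbolicPair Q u v)
    (hQ : ∀ w ∈ polarOrthogonal Q u v, Q w = 0) {w : M} (hw : w ∈ polarOrthogonal Q u v) :
    Q.polarBilin w = 0 := by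
  ext x
  obtain ⟨a, b, y, hy, rfl⟩ := h.exists_eq_add_add x
  obtain ⟨hu, hv⟩ := mem_polarOrthogonal.1 hw
  have hwy : polar Q w y = 0 := by
    simp [polar, hQ w hw, hQ y hy, hQ (w + y) (add_mem hw hy)]
  simp [hwy, polar_comm Q w u, polar_comm Q w v, hu, hv]

end IsHyperbolicPair

theorem linearMap_eq_zero_of_forall_quadraticForm_mul_eq_zero [NoZeroDivisors R]
    [NeZero (2 : R)] {Q : QuadraticForm R M} {l : M →ₗ[R] R} (hQ : Q ≠ 0)
    (h : ∀ x, Q x * l x = 0) : l = 0 := by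
  obtain ⟨y, hy⟩ : ∃ y, Q y ≠ 0 := DFunLike.ne_iff.1 hQ
  have hly : l y = 0 := (mul_eq_zero.1 (h y)).resolve_left hy
  by_contra hl
  obtain ⟨x, hx⟩ : ∃ x, l x ≠ 0 := DFunLike.ne_iff.1 hl
  have h₀ : Q x = 0 := (mul_eq_zero.1 (h x)).resolve_right hx
  have h₁ : Q (x + y) = 0 := (mul_eq_zero.1 (h (x + y))).resolve_right (by simpa [hly])
  have h₂ : Q (x + -y) = 0 := (mul_eq_zero.1 (h (x + -y))).resolve_right (by simpa [hly])
  rw [QuadraticMap.map_add Q, h₀] at h₁ h₂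
  rw [QuadraticMap.map_neg, polar_neg_right] at h₂
  have : 2 * Q y = 0 := by linear_combination h₁ + h₂
  exact hy ((mul_eq_zero.1 this).resolve_left two_ne_zero)

section Field

variable {K V : Type*} [Field K] [AddCommGroup V] [Module K V]

theorem exists_ne_zero_mem_polarOrthogonal (hV : 2 < finrank K V) (Q : QuadraticForm K V)
    (u v : V) : ∃ w ∈ polarOrthogonal Q u v, w ≠ 0 := by
  have : FiniteDimensional K V := FiniteDimensional.of_finrank_pos (by lia)
  have hker : LinearMap.ker ((Q.polarBilin u).prod (Q.polarBilin v)) ≠ ⊥ :=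
    LinearMap.ker_ne_bot_of_finrank_lt (by simpa using hV)
  rw [LinearMap.ker_prod] at hker
  exact Submodule.exists_mem_ne_zero_of_ne_bot hker

theorem exists_isHyperbolicPair {Q : QuadraticForm K V} {u : V} (hu : Q u = 0)
    (hpolar : Q.polarBilin u ≠ 0) : ∃ v, IsHyperbolicPair Q u v := by
  obtain ⟨d, hd⟩ : ∃ d, polar Q u d ≠ 0 := DFunLike.ne_iff.1 hpolar
  set β := polar Q u d with hβ
  refine ⟨β⁻¹ • d + (-(β⁻¹ ^ 2 * Q d)) • u + 0, hu, ?_, ?_⟩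
  · rw [quadraticForm_map_smul_add_smul_add]
    simp only [QuadraticMap.map_zero, polar_zero_right, polar_comm Q d u, ← hβ, hu]
    field_simp
    ring
  · simp [← hβ, hd, hu]

end Field

end HyperbolicPair

theorem polynomial_eq_zero_of_eventually_eval_eq_zero {R : Type*} [CommRing R] [IsDomain R]
    [TopologicalSpace R] [T1Space R] {p : Polynomial R} {x : R} [NeBot (𝓝[≠] x)]
    (h : ∀ᶠ t in 𝓝 x, p.eval t = 0) : p = 0 :=
  p.eq_zero_of_infinite_isRoot (infinite_of_mem_nhds x h)

theorem eventually_nhdsGT_pos_of_hasDerivAt_pos {f : ℝ → ℝ} {c x : ℝ} (h : HasDerivAt f c x)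
    (hc : 0 < c) (hx : f x = 0) : ∀ᶠ t in 𝓝[>] x, 0 < f t := by
  have hsign := eventually_nhdsWithin_sign_eq_of_deriv_pos (h.deriv.symm ▸ hc) hx
  filter_upwards [hsign.filter_mono nhdsWithin_le_nhds, self_mem_nhdsWithin] with t ht hxt
  rwa [sign_pos (sub_pos.2 hxt), sign_eq_one_iff] at ht

section Analytic

variable {E : Type*} [NormedAddCommGroup E] [NormedSpace ℝ E]

section FiniteDimensional

variable [FiniteDimensional ℝ E]

theorem quadraticForm_differentiable (Q : QuadraticForm ℝ E) : Differentiable ℝ Q := by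
  have hQ : ⇑Q = fun v => (2 : ℝ)⁻¹ * Q.polarBilin.toContinuousBilinearMap v v := by
    ext v
    simp
  rw [hQ]
  fun_prop

theorem quadraticForm_continuous (Q : QuadraticForm ℝ E) : Continuous Q :=
  (quadraticForm_differentiable Q).continuous

end FiniteDimensional

/-- The defining equation `Q₁ Q₃ - Q₂ ^ 2` of the discriminant of the conic bundle with
coefficients `Q₁`, `Q₂`, `Q₃`. -/
def conicDiscr (Q₁ Q₂ Q₃ : QuadraticForm ℝ E) (v : E) : ℝ :=
  Q₁ v * Q₃ v - Q₂ v ^ 2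

variable {Q₁ Q₂ Q₃ : QuadraticForm ℝ E} {P e : E}

theorem conicDiscr_hasLineDerivAt (Q₁ Q₂ Q₃ : QuadraticForm ℝ E) (P e : E) :
    HasLineDerivAt ℝ (conicDiscr Q₁ Q₂ Q₃)
      (polar Q₁ P e * Q₃ P + Q₁ P * polar Q₃ P e - 2 * Q₂ P * polar Q₂ P e) P e := by
  have h := ((Q₁.hasLineDerivAt P e).mul (Q₃.hasLineDerivAt P e)).sub
    ((Q₂.hasLineDerivAt P e).pow 2)
  simpa [HasLineDerivAt, conicDiscr] using! h

theorem mul_pos_of_conicDiscr_pos (h : 0 < conicDiscr Q₁ Q₂ Q₃ P) : 0 < Q₁ P * Q₃ P :=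
  (sq_nonneg (Q₂ P)).trans_lt (sub_pos.1 h)

theorem conicDiscr_of_eq_smul (k : ℝ) (v : E) :
    conicDiscr Q₁ (k • Q₁) Q₃ v = Q₁ v * (Q₃ - k ^ 2 • Q₁) v := by
  simp only [conicDiscr, _root_.sub_apply, _root_.smul_apply, smul_eq_mul]
  ring

variable [FiniteDimensional ℝ E]

theorem conicDiscr_differentiable (Q₁ Q₂ Q₃ : QuadraticForm ℝ E) :
    Differentiable ℝ (conicDiscr Q₁ Q₂ Q₃) :=
  ((quadraticForm_differentiable Q₁).mul (quadraticForm_differentiable Q₃)).sub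
    ((quadraticForm_differentiable Q₂).pow 2)

theorem conicDiscr_continuous (Q₁ Q₂ Q₃ : QuadraticForm ℝ E) : Continuous (conicDiscr Q₁ Q₂ Q₃) :=
  (conicDiscr_differentiable Q₁ Q₂ Q₃).continuous

theorem fderiv_conicDiscr_eq_zero_iff (h₁ : Q₁ P = 0) (h₂ : Q₂ P = 0) :
    fderiv ℝ (conicDiscr Q₁ Q₂ Q₃) P = 0 ↔ Q₁.polarBilin P = 0 ∨ Q₃ P = 0 := by
  have hd (d : E) : fderiv ℝ (conicDiscr Q₁ Q₂ Q₃) P d = polar Q₁ P d * Q₃ P := by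
    rw [← (conicDiscr_differentiable Q₁ Q₂ Q₃ P).lineDeriv_eq_fderiv,
      (conicDiscr_hasLineDerivAt Q₁ Q₂ Q₃ P d).lineDeriv, h₁, h₂]
    ring
  simp only [ContinuousLinearMap.ext_iff, LinearMap.ext_iff, hd, _root_.zero_apply, mul_eq_zero,
    forall_or_right, polarBilin_apply_apply, LinearMap.zero_apply]

/-- Otherwise the discriminant changes sign along a segment in direction `e`, on which `Q₁ > 0`. -/
theorem eventually_eq_zero_of_forall_conicDiscr_ne_zero
    (hno : ∀ x, 0 < Q₁ x → conicDiscr Q₁ Q₂ Q₃ x ≠ 0) (he : IsHyperbolicPair Q₁ P e)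
    (h₂ : Q₂ P = 0) (h₃ : 0 < Q₃ P) : ∀ᶠ x in 𝓝 P, Q₁ x = 0 → Q₂ x = 0 := by
  have hf := conicDiscr_continuous Q₁ Q₂ Q₃
  obtain ⟨t₀, hft₀, ht₀⟩ : ∃ t₀ : ℝ, 0 < conicDiscr Q₁ Q₂ Q₃ (P + t₀ • e) ∧ 0 < t₀ := by
    have hpos := eventually_nhdsGT_pos_of_hasDerivAt_pos (conicDiscr_hasLineDerivAt Q₁ Q₂ Q₃ P e)
      (by simpa [he.polar_eq_one, he.isotropic_left, h₂])
      (by simp [conicDiscr, he.isotropic_left, h₂])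
    exact (hpos.and self_mem_nhdsWithin).exists
  have hfar : ∀ᶠ x in 𝓝 P, 0 < conicDiscr Q₁ Q₂ Q₃ (x + t₀ • e) :=
    (hf.comp (by fun_prop : Continuous (· + t₀ • e))).continuousAt.eventually (lt_mem_nhds hft₀)
  have hpolar : ∀ᶠ x in 𝓝 P, 0 < polar Q₁ x e := by
    have hc : Continuous fun x => polar Q₁ x e := by
      have := quadraticForm_continuous Q₁
      unfold polar
      fun_prop
    exact hc.continuousAt.eventually (lt_mem_nhds (by simp [he.polar_eq_one]))
  filter_upwards [hfar, hpolar] with x hfx hpx hx₁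
  by_contra hx₂
  have hneg : conicDiscr Q₁ Q₂ Q₃ (x + (0 : ℝ) • e) < 0 := by
    simp [conicDiscr, hx₁, sq_pos_of_ne_zero hx₂]
  obtain ⟨t, ht, hzero⟩ := intermediate_value_Ioo ht₀.le
    (hf.comp (by fun_prop : Continuous fun t : ℝ => x + t • e)).continuousOn ⟨hneg, hfx⟩
  refine hno (x + t • e) ?_ hzero
  have hQ₁ : Q₁ (x + t • e) = t * polar Q₁ x e := by
    simp [QuadraticMap.map_add, QuadraticMap.map_smul, hx₁, he.isotropic_right]
  exact hQ₁ ▸ mul_pos ht.1 hpx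

end Analytic

section Proportional

variable {E : Type*} [NormedAddCommGroup E] [NormedSpace ℝ E] {Q₁ Q₂ Q₃ : QuadraticForm ℝ E}
  {P e : E}

/-- The parabola `P + t w - t² Q₁(w) e` lies on the quadric `Q₁ = 0`; the four equations are the
coefficients of `Q₂` along it. -/
theorem IsHyperbolicPair.coeff_eq_of_eventually_eq_zero (he : IsHyperbolicPair Q₁ P e)
    (hvan : ∀ᶠ x in 𝓝 P, Q₁ x = 0 → Q₂ x = 0) {w : E} (hw : w ∈ polarOrthogonal Q₁ P e) :
    polar Q₂ P w = 0 ∧ Q₂ w = polar Q₂ P e * Q₁ w ∧ Q₁ w * polar Q₂ e w = 0 ∧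
      Q₁ w ^ 2 * Q₂ e = 0 := by
  have hP : Q₂ P = 0 := hvan.self_of_nhds he.isotropic_left
  let γ : ℝ → E := fun t => (1 : ℝ) • P + (-(t ^ 2 * Q₁ w)) • e + t • w
  have hγ : Tendsto γ (𝓝 0) (𝓝 P) := by
    have : Continuous γ := by fun_prop
    simpa [γ] using this.tendsto 0
  have hγ₁ (t : ℝ) : Q₁ (γ t) = 0 := by
    rw [he.map_add_add (Submodule.smul_mem _ t hw), QuadraticMap.map_smul, smul_eq_mul]
    ring
  let p : Polynomial ℝ := .monomial 1 (polar Q₂ P w) + .monomial 2 (Q₂ w - polar Q₂ P e * Q₁ w)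
    - .monomial 3 (Q₁ w * polar Q₂ e w) + .monomial 4 (Q₁ w ^ 2 * Q₂ e)
  have hp : p = 0 := by
    apply polynomial_eq_zero_of_eventually_eval_eq_zero (x := 0)
    filter_upwards [hγ.eventually hvan] with t ht
    have hγ₂ := ht (hγ₁ t)
    simp only [γ, quadraticForm_map_smul_add_smul_add, QuadraticMap.map_smul, polar_smul_right,
      smul_eq_mul, hP] at hγ₂
    simp only [p, Polynomial.eval_add, Polynomial.eval_sub, Polynomial.eval_monomial]
    linear_combination hγ₂
  have hcoeff (i : ℕ) : p.coeff i = 0 := by rw [hp, Polynomial.coeff_zero]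
  simp only [p, Polynomial.coeff_add, Polynomial.coeff_sub, Polynomial.coeff_monomial] at hcoeff
  exact ⟨by simpa using hcoeff 1, sub_eq_zero.1 (by simpa using hcoeff 2),
    by simpa using hcoeff 3, by simpa using hcoeff 4⟩

theorem IsHyperbolicPair.eq_smul_of_eventually_eq_zero (he : IsHyperbolicPair Q₁ P e)
    (hvan : ∀ᶠ x in 𝓝 P, Q₁ x = 0 → Q₂ x = 0) {w₀ : E} (hw₀ : w₀ ∈ polarOrthogonal Q₁ P e)
    (hQw₀ : Q₁ w₀ ≠ 0) : Q₂ = polar Q₂ P e • Q₁ := by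
  have hP : Q₂ P = 0 := hvan.self_of_nhds he.isotropic_left
  have hcoeff := fun {w : E} => he.coeff_eq_of_eventually_eq_zero hvan (w := w)
  have he₂ : Q₂ e = 0 := by simpa [hQw₀] using (hcoeff hw₀).2.2.2
  let W := polarOrthogonal Q₁ P e
  have hpolar : (Q₂.polarBilin e).comp W.subtype = 0 := by
    refine linearMap_eq_zero_of_forall_quadraticForm_mul_eq_zero (Q := Q₁.comp W.subtype) ?_
      fun w => (hcoeff w.2).2.2.1
    exact fun h => hQw₀ (DFunLike.congr_fun h ⟨w₀, hw₀⟩)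
  ext x
  obtain ⟨a, b, w, hw, rfl⟩ := he.exists_eq_add_add x
  have hew : polar Q₂ e w = 0 := DFunLike.congr_fun hpolar ⟨w, hw⟩
  obtain ⟨hPw, hQw, -⟩ := hcoeff hw
  rw [_root_.smul_apply, he.map_add_add hw, smul_eq_mul]
  rw [quadraticForm_map_smul_add_smul_add, hP, he₂, hew, hPw, hQw]
  ring

/-- If `Q₁` vanishes on the orthogonal complement of the hyperbolic pair, then it is degenerate
there, and every nonzero vector of the complement is a singular point of the discriminant. -/
theorem exists_eq_smul_of_forall_conicDiscr_ne_zero (hE : 2 < finrank ℝ E)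
    (hsm : ∀ x ≠ 0, Q₁ x = 0 → Q₂ x = 0 → fderiv ℝ (conicDiscr Q₁ Q₂ Q₃) x ≠ 0)
    (hno : ∀ x, 0 < Q₁ x → conicDiscr Q₁ Q₂ Q₃ x ≠ 0) (hP : P ≠ 0) (h₁ : Q₁ P = 0)
    (h₂ : Q₂ P = 0) (h₃ : 0 < Q₃ P) : ∃ k : ℝ, Q₂ = k • Q₁ := by
  have : FiniteDimensional ℝ E := FiniteDimensional.of_finrank_pos (by lia)
  obtain ⟨e, he⟩ := exists_isHyperbolicPair h₁ fun h =>
    hsm P hP h₁ h₂ ((fderiv_conicDiscr_eq_zero_iff h₁ h₂).2 (.inl h))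
  have hvan := eventually_eq_zero_of_forall_conicDiscr_ne_zero hno he h₂ h₃
  by_cases hW : ∀ w ∈ polarOrthogonal Q₁ P e, Q₁ w = 0
  · obtain ⟨w, hw, hw0⟩ := exists_ne_zero_mem_polarOrthogonal hE Q₁ P e
    have hw₂ : Q₂ w = 0 := by
      rw [(he.coeff_eq_of_eventually_eq_zero hvan hw).2.1, hW w hw, mul_zero]
    exact absurd ((fderiv_conicDiscr_eq_zero_iff (hW w hw) hw₂).2
      (.inl (he.polarBilin_eq_zero_of_mem hW hw))) (hsm w hw0 (hW w hw) hw₂)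
  · push Not at hW
    obtain ⟨w, hw, hQw⟩ := hW
    exact ⟨_, he.eq_smul_of_eventually_eq_zero hvan hw hQw⟩

theorem closure_conicDiscr_pos_subset [FiniteDimensional ℝ E] (Q₁ Q₂ Q₃ : QuadraticForm ℝ E) :
    closure {x | 0 < conicDiscr Q₁ Q₂ Q₃ x ∧ 0 < Q₁ x} ⊆
      {x | 0 ≤ conicDiscr Q₁ Q₂ Q₃ x ∧ 0 ≤ Q₁ x ∧ 0 ≤ Q₃ x} :=
  closure_minimal
    (fun _ hx => ⟨hx.1.le, hx.2.le,
      ((pos_iff_pos_of_mul_pos (mul_pos_of_conicDiscr_pos hx.1)).1 hx.2).le⟩)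
    ((isClosed_le continuous_const (conicDiscr_continuous Q₁ Q₂ Q₃)).inter
      ((isClosed_le continuous_const (quadraticForm_continuous Q₁)).inter
        (isClosed_le continuous_const (quadraticForm_continuous Q₃))))

theorem conicDiscr_pos_of_forall_ne_smul (hE : 2 < finrank ℝ E)
    (hsm : ∀ x ≠ 0, Q₁ x = 0 → Q₂ x = 0 → fderiv ℝ (conicDiscr Q₁ Q₂ Q₃) x ≠ 0)
    (hno : ∀ x, 0 < Q₁ x → conicDiscr Q₁ Q₂ Q₃ x ≠ 0) (hne : ∀ k : ℝ, Q₂ ≠ k • Q₁)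
    (hpos : ∃ x, 0 < conicDiscr Q₁ Q₂ Q₃ x ∧ 0 < Q₁ x) {P : E} (hP : P ≠ 0) :
    0 < conicDiscr Q₁ Q₂ Q₃ P := by
  have : FiniteDimensional ℝ E := FiniteDimensional.of_finrank_pos (by lia)
  let U : Set E := {x | 0 < conicDiscr Q₁ Q₂ Q₃ x ∧ 0 < Q₁ x}
  have hU : IsOpen U :=
    (isOpen_lt continuous_const (conicDiscr_continuous Q₁ Q₂ Q₃)).inter
      (isOpen_lt continuous_const (quadraticForm_continuous Q₁))
  have hclosed : closure U ∩ {0}ᶜ ⊆ U := by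
    rintro x ⟨hxU, hx0⟩
    obtain ⟨hf, h₁, h₃⟩ := closure_conicDiscr_pos_subset Q₁ Q₂ Q₃ hxU
    rcases h₁.lt_or_eq with h₁ | h₁
    · exact ⟨hf.lt_of_ne' (hno x h₁), h₁⟩
    have h₂ : Q₂ x = 0 := by
      have : Q₂ x ^ 2 ≤ 0 := by simpa [conicDiscr, ← h₁] using hf
      exact pow_eq_zero_iff two_ne_zero |>.1 (this.antisymm (sq_nonneg _))
    have h₃' : Q₃ x ≠ 0 := fun h =>
      hsm x hx0 h₁.symm h₂ ((fderiv_conicDiscr_eq_zero_iff h₁.symm h₂).2 (.inr h))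
    obtain ⟨k, hk⟩ := exists_eq_smul_of_forall_conicDiscr_ne_zero hE hsm hno hx0 h₁.symm h₂
      (h₃.lt_of_ne' h₃')
    exact absurd hk (hne k)
  have hconn : IsPreconnected ({0}ᶜ : Set E) :=
    (isConnected_compl_singleton_of_one_lt_rank (one_lt_rank_of_one_lt_finrank (by lia))
      0).isPreconnected
  obtain ⟨x, hx⟩ := hpos
  have hx0 : x ≠ 0 := by
    rintro rfl
    simpa using hx.2
  exact (hconn.subset_of_closure_inter_subset hU ⟨x, hx0, hx⟩ hclosed hP).1

end Proportional

section ProjectiveSpace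

variable {n : ℕ}

/-- The locus in projective space of a condition `p` on homogeneous coordinates, which is not
required to be scaling-invariant: some representative has to satisfy it. -/
def projLocus (p : (Fin n → ℝ) → Prop) : Set (RP n) :=
  {x | ∃ P : {v : Fin n → ℝ // v ≠ 0}, Quot.mk (projRel n) P = x ∧ p P}

theorem joinedIn_projLocus {p : (Fin n → ℝ) → Prop} {γ : ℝ → Fin n → ℝ} (hγ : Continuous γ)
    (h0 : ∀ t, γ t ≠ 0) (hp : ∀ t, p (γ t)) :
    JoinedIn (projLocus p) (Quot.mk (projRel n) ⟨γ 0, h0 0⟩)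
      (Quot.mk (projRel n) ⟨γ 1, h0 1⟩) := by
  refine JoinedIn.ofLine (f := fun t => Quot.mk (projRel n) ⟨γ t, h0 t⟩)
    (continuous_quot_mk.comp (hγ.subtype_mk h0)).continuousOn rfl rfl ?_
  rintro _ ⟨t, -, rfl⟩
  exact ⟨_, rfl, hp t⟩

section Quadric

variable {Q : QuadraticForm ℝ (Fin n → ℝ)} {u v : {x : Fin n → ℝ // x ≠ 0}}

theorem joinedIn_quadric_of_polar_eq_zero (hu : Q u = 0) (hv : Q v = 0) (huv : polar Q u v = 0) :
    JoinedIn (projLocus (Q · = 0)) (Quot.mk (projRel n) u) (Quot.mk (projRel n) v) := by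
  by_cases h : projRel n u v
  · rw [Quot.sound h]
    exact JoinedIn.refl ⟨v, rfl, hv⟩
  have hne (t : ℝ) : (1 - t) • (u : Fin n → ℝ) + t • (v : Fin n → ℝ) ≠ 0 := by
    intro ht
    have ht0 : t ≠ 0 := by
      rintro rfl
      exact u.2 (by simpa using ht)
    have hv' : (-(t⁻¹ * (1 - t))) • (u : Fin n → ℝ) = v := by
      rw [neg_smul, mul_smul, eq_neg_of_add_eq_zero_left ht, smul_neg, neg_neg,
        inv_smul_smul₀ ht0]
    refine h ⟨_, fun hc => v.2 ?_, hv'⟩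
    rw [← hv', hc, zero_smul]
  have hQ (t : ℝ) : Q ((1 - t) • (u : Fin n → ℝ) + t • (v : Fin n → ℝ)) = 0 := by
    simp [QuadraticMap.map_add, QuadraticMap.map_smul, hu, hv, huv]
  simpa using joinedIn_projLocus (p := (Q · = 0)) (by fun_prop) hne hQ

/-- Inside the plane spanned by `u`, `v` and an anisotropic vector `w` orthogonal to both, the
quadric is a smooth conic, which is parametrized by `(1 - t)² u + c t² v + t (1 - t) w`. -/
theorem joinedIn_quadric_of_polar_ne_zero (hu : Q u = 0) (hv : Q v = 0) (huv : polar Q u v ≠ 0)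
    {w : Fin n → ℝ} (hw : w ∈ polarOrthogonal Q u v) (hQw : Q w ≠ 0) :
    JoinedIn (projLocus (Q · = 0)) (Quot.mk (projRel n) u) (Quot.mk (projRel n) v) := by
  obtain ⟨huw, hvw⟩ := mem_polarOrthogonal.1 hw
  set c := -Q w / polar Q u v with hc
  have hc0 : c ≠ 0 := div_ne_zero (neg_ne_zero.2 hQw) huv
  let γ : ℝ → Fin n → ℝ := fun t => (1 - t) ^ 2 • u.1 + (c * t ^ 2) • v.1 + (t * (1 - t)) • w
  have hne (t : ℝ) : γ t ≠ 0 := by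
    intro ht
    have hu_t : polar Q u (γ t) = c * t ^ 2 * polar Q u v := by simp [γ, hu, huw]
    have hv_t : polar Q v (γ t) = (1 - t) ^ 2 * polar Q u v := by
      simp [γ, hv, hvw, polar_comm Q v u]
    rw [ht, polar_zero_right] at hu_t hv_t
    have ht0 : t = 0 := by simpa [huv, hc0] using hu_t
    exact huv (by simpa [ht0] using hv_t.symm)
  have hQ (t : ℝ) : Q (γ t) = 0 := by
    simp only [γ, quadraticForm_map_smul_add_smul_add, QuadraticMap.map_smul, polar_smul_right,
      smul_eq_mul, hu, hv, huw, hvw, hc]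
    field_simp
    ring
  have hpath := joinedIn_projLocus (p := (Q · = 0)) (by fun_prop) hne hQ
  have h0 : (⟨γ 0, hne 0⟩ : {x : Fin n → ℝ // x ≠ 0}) = u := Subtype.ext (by simp [γ])
  have h1 : Quot.mk (projRel n) v = Quot.mk (projRel n) ⟨γ 1, hne 1⟩ :=
    Quot.sound ⟨c, hc0, by simp [γ]⟩
  rwa [h0, ← h1] at hpath

theorem joinedIn_quadric (hn : 2 < n) (hu : Q u = 0) (hv : Q v = 0) :
    JoinedIn (projLocus (Q · = 0)) (Quot.mk (projRel n) u) (Quot.mk (projRel n) v) := by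
  by_cases huv : polar Q u v = 0
  · exact joinedIn_quadric_of_polar_eq_zero hu hv huv
  obtain ⟨w, hw, hw0⟩ := exists_ne_zero_mem_polarOrthogonal (by simpa using hn) Q u v
  by_cases hQw : Q w = 0
  · obtain ⟨huw, hvw⟩ := mem_polarOrthogonal.1 hw
    exact (joinedIn_quadric_of_polar_eq_zero (v := ⟨w, hw0⟩) hu hQw huw).trans
      (joinedIn_quadric_of_polar_eq_zero hv hQw hvw).symm
  · exact joinedIn_quadric_of_polar_ne_zero hu hv huv hw hQw

theorem isPreconnected_quadric (hn : 2 < n) (Q : QuadraticForm ℝ (Fin n → ℝ)) :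
    IsPreconnected (projLocus (Q · = 0)) := by
  rcases (projLocus (Q · = 0)).eq_empty_or_nonempty with h | h
  · rw [h]
    exact isPreconnected_empty
  refine (isPathConnected_iff.2 ⟨h, ?_⟩).isConnected.isPreconnected
  rintro _ ⟨u, rfl, hu⟩ _ ⟨v, rfl, hv⟩
  exact joinedIn_quadric hn hu hv

end Quadric

theorem card_connectedComponents_union_le_two {X : Type*} [TopologicalSpace X] {A B : Set X}
    (hA : IsPreconnected A) (hB : IsPreconnected B) :
    ENat.card (ConnectedComponents ↥(A ∪ B)) ≤ 2 := by
  have hle {C : Set X} (hC : IsPreconnected C) (hCAB : C ⊆ A ∪ B) :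
      (Set.range fun c : C => (Set.inclusion hCAB c : ConnectedComponents ↥(A ∪ B))).encard
        ≤ 1 := by
    have := Subtype.preconnectedSpace hC
    exact Set.encard_le_one_iff_subsingleton.2 (isPreconnected_range
      (ConnectedComponents.continuous_coe.comp (continuous_inclusion hCAB))).subsingleton
  rw [← Set.encard_univ]
  calc Set.univ.encard
      ≤ _ := Set.encard_le_encard fun c _ => by
        obtain ⟨⟨x, hx⟩, rfl⟩ := ConnectedComponents.surjective_coe c
        exact hx.imp (fun hxA => ⟨⟨x, hxA⟩, rfl⟩) fun hxB => ⟨⟨x, hxB⟩, rfl⟩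
    _ ≤ _ := Set.encard_union_le _ _
    _ ≤ 1 + 1 := add_le_add (hle hA Set.subset_union_left) (hle hB Set.subset_union_right)
    _ = 2 := one_add_one_eq_two

theorem card_connectedComponents_conicDiscr_smul_le_two (hn : 2 < n)
    (Q₁ Q₃ : QuadraticForm ℝ (Fin n → ℝ)) (k : ℝ) :
    ENat.card (ConnectedComponents
      ↥(projLocus fun P => conicDiscr Q₁ (k • Q₁) Q₃ P = 0)) ≤ 2 := by
  have hZ : (projLocus fun P => conicDiscr Q₁ (k • Q₁) Q₃ P = 0) =
      projLocus (Q₁ · = 0) ∪ projLocus ((Q₃ - k ^ 2 • Q₁) · = 0) := by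
    ext x
    simp only [projLocus, conicDiscr_of_eq_smul, mul_eq_zero, and_or_left, exists_or]
    rfl
  rw [hZ]
  exact card_connectedComponents_union_le_two (isPreconnected_quadric hn _)
    (isPreconnected_quadric hn _)

theorem exists_conicDiscr_pos_of_not_isConnected {Q₁ Q₂ Q₃ : QuadraticForm ℝ (Fin n → ℝ)}
    (hle : ¬ IsConnected (projLocus fun P => conicDiscr Q₁ Q₂ Q₃ P ≤ 0))
    (hS₂ : IsConnected (projLocus fun P => 0 ≤ Q₁ P ∨ conicDiscr Q₁ Q₂ Q₃ P ≤ 0)) :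
    ∃ P, 0 < conicDiscr Q₁ Q₂ Q₃ P ∧ 0 < Q₁ P := by
  by_contra! h
  have himp (P : Fin n → ℝ) (hQ : 0 ≤ Q₁ P) : conicDiscr Q₁ Q₂ Q₃ P ≤ 0 := by
    by_contra! hf
    exact (mul_pos_of_conicDiscr_pos hf).not_ge (by simp [(h P hf).antisymm hQ])
  refine hle ?_
  convert hS₂ using 4 with P
  exact (or_iff_right_of_imp (himp P)).symm

end ProjectiveSpace

theorem exists_sq_eq_and_mul_eq {a b c : ℝ} (ha : 0 < a) (h : a * c - b ^ 2 = 0) :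
    ∃ r s : ℝ, r ^ 2 = a ∧ r * s = b ∧ s ^ 2 = c := by
  have hr : √a ≠ 0 := (Real.sqrt_pos.2 ha).ne'
  refine ⟨√a, b / √a, Real.sq_sqrt ha.le, mul_div_cancel₀ b hr, ?_⟩
  rw [div_pow, Real.sq_sqrt ha.le, div_eq_iff ha.ne']
  linarith

theorem three_ovals_connected_gives_cover_point_general {n : ℕ} (hn : 2 < n)
    (Q₁ Q₂ Q₃ : QuadraticForm ℝ (Fin n → ℝ))
    (hsm : ∀ P ≠ 0, Q₁ P = 0 → Q₂ P = 0 → fderiv ℝ (conicDiscr Q₁ Q₂ Q₃) P ≠ 0)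
    (hcomp : 2 < ENat.card (ConnectedComponents
      ↥(projLocus fun P => conicDiscr Q₁ Q₂ Q₃ P = 0)))
    (hpos : ∃ P, 0 < conicDiscr Q₁ Q₂ Q₃ P ∧ 0 < Q₁ P) :
    (∃ P : Fin n → ℝ, P ≠ 0 ∧ Q₁ P * Q₃ P - Q₂ P ^ 2 = 0 ∧ 0 < Q₁ P) ∧
    (∃ (P : Fin n → ℝ) (r s : ℝ), P ≠ 0 ∧
      r ^ 2 = Q₁ P ∧ r * s = Q₂ P ∧ s ^ 2 = Q₃ P) := by
  suffices hzero : ∃ P, 0 < Q₁ P ∧ conicDiscr Q₁ Q₂ Q₃ P = 0 by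
    obtain ⟨P, hQ, hf⟩ := hzero
    have hP : P ≠ 0 := by
      rintro rfl
      simp at hQ
    obtain ⟨r, s, hrs⟩ := exists_sq_eq_and_mul_eq hQ hf
    exact ⟨⟨P, hP, hf, hQ⟩, P, r, s, hP, hrs⟩
  by_contra! hno
  have hne (k : ℝ) : Q₂ ≠ k • Q₁ := by
    rintro rfl
    exact hcomp.not_ge (card_connectedComponents_conicDiscr_smul_le_two hn Q₁ Q₃ k)
  have hZ : Nonempty (ConnectedComponents ↥(projLocus fun P => conicDiscr Q₁ Q₂ Q₃ P = 0)) :=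
    (ENat.card_ne_zero_iff_nonempty _).1 hcomp.ne_bot
  obtain ⟨⟨_, P, -, hf⟩, -⟩ := ConnectedComponents.surjective_coe hZ.some
  exact (conicDiscr_pos_of_forall_ne_smul (by simpa using hn) hsm hno hne hpos P.2).ne' hf

/-- If the quartic `Δ = {f = 0}`, `f = Q₁Q₃ − Q₂²`, is smooth at its real points, its real
locus `Z ⊆ ℝP²` has exactly three connected components, the set `{f ≤ 0}` is not connected,
and the image `S₂ = {Q₁ ≥ 0} ∪ {f ≤ 0}` of `Y(ℝ)` in `ℝP²` is connected, then there is a real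
point of `Δ` with `Q₁ > 0`; consequently the discriminant cover `Δ̃` has a real point. -/
theorem three_ovals_connected_gives_cover_point
    (Q₁ Q₂ Q₃ : QuadraticForm ℝ (Fin 3 → ℝ))
    (hsm : ∀ P : Fin 3 → ℝ, P ≠ 0 → Q₁ P * Q₃ P - Q₂ P ^ 2 = 0 →
      fderiv ℝ (fun v => Q₁ v * Q₃ v - Q₂ v ^ 2) P ≠ 0)
    (Z : Set (RP 3))
    (hZ : Z = {x | ∃ P : {v : Fin 3 → ℝ // v ≠ 0}, Quot.mk (projRel 3) P = x ∧
      Q₁ (P : Fin 3 → ℝ) * Q₃ (P : Fin 3 → ℝ) - Q₂ (P : Fin 3 → ℝ) ^ 2 = 0})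
    (hZ3 : Nonempty (ConnectedComponents ↥Z ≃ Fin 3))
    (hle : ¬ IsConnected {x : RP 3 | ∃ P : {v : Fin 3 → ℝ // v ≠ 0},
      Quot.mk (projRel 3) P = x ∧
      Q₁ (P : Fin 3 → ℝ) * Q₃ (P : Fin 3 → ℝ) - Q₂ (P : Fin 3 → ℝ) ^ 2 ≤ 0})
    (hS₂ : IsConnected {x : RP 3 | ∃ P : {v : Fin 3 → ℝ // v ≠ 0},
      Quot.mk (projRel 3) P = x ∧
      (0 ≤ Q₁ (P : Fin 3 → ℝ) ∨
        Q₁ (P : Fin 3 → ℝ) * Q₃ (P : Fin 3 → ℝ) - Q₂ (P : Fin 3 → ℝ) ^ 2 ≤ 0)}) :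
    (∃ P : Fin 3 → ℝ, P ≠ 0 ∧ Q₁ P * Q₃ P - Q₂ P ^ 2 = 0 ∧ 0 < Q₁ P) ∧
    (∃ (P : Fin 3 → ℝ) (r s : ℝ), P ≠ 0 ∧
      r ^ 2 = Q₁ P ∧ r * s = Q₂ P ∧ s ^ 2 = Q₃ P) := by
  subst hZ
  have hthree : (2 : ℕ∞) < ENat.card (Fin 3) := by norm_num
  exact three_ovals_connected_gives_cover_point_general (by norm_num) Q₁ Q₂ Q₃
    (fun P hP h₁ h₂ => hsm P hP (by simp [h₁, h₂]))
    (hthree.trans_eq (ENat.card_congr hZ3.some).symm)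
    (exists_conicDiscr_pos_of_not_isConnected hle hS₂)
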